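/- For κ > 0 and c ∈ ℝ, the smallest positive time T at which cos(κT) + (c/(2κ))·sin(κT) = 0 is T = π/(2κ) + (1/κ)·arctan(c/(2κ)). In particular T is positive and finite, so the solution of the Fisher-Rao Euler-Arnold flow breaks down in finite time. -/

import Mathlib

open Real

/-- For `κ > 0` and `c ∈ ℝ`, the time `T = π/(2κ) + (1/κ) arctan(c/(2κ))` is positive,
it satisfies `cos(κT) + (c/(2κ)) sin(κT) = 0`, and it is the smallest positive time with
this property: the solution of the Fisher-Rao Euler-Arnold flow breaks down in finite time. -/
theorem fisherRao_breakdown_time (κ c : ℝ) (hκ : 0 < κ)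
    (T : ℝ) (hT : T = π / (2 * κ) + (1 / κ) * arctan (c / (2 * κ))) :
    0 < T ∧
    cos (κ * T) + (c / (2 * κ)) * sin (κ * T) = 0 ∧
    ∀ t : ℝ, 0 < t → t < T → cos (κ * t) + (c / (2 * κ)) * sin (κ * t) ≠ 0 := by
  set x := c / (2 * κ) with hx
  have hlo := neg_pi_div_two_lt_arctan x
  have hhi := arctan_lt_pi_div_two x
  have hcos : 0 < cos (arctan x) := cos_arctan_pos x
  have hsin : x * cos (arctan x) = sin (arctan x) := by
    have h := tan_mul_cos hcos.ne'
    rwa [tan_arctan] at h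
  have key : ∀ θ : ℝ, (cos θ + x * sin θ) * cos (arctan x) = cos (θ - arctan x) := by
    intro θ
    rw [cos_sub, ← hsin]
    ring
  have hκT : κ * T = π / 2 + arctan x := by
    rw [hT]
    field_simp
  refine ⟨?_, ?_, ?_⟩
  · have h : 0 < κ * T := by rw [hκT]; linarith
    exact pos_of_mul_pos_right h hκ.le
  · have h := key (κ * T)
    have h2 : κ * T - arctan x = π / 2 := by rw [hκT]; ring
    rw [h2, cos_pi_div_two] at h
    exact (mul_eq_zero.mp h).resolve_right hcos.ne'
  · intro t ht htT h0
    have h := key (κ * t)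
    rw [h0, zero_mul] at h
    have h1 : 0 < κ * t := mul_pos hκ ht
    have h2 : κ * t < κ * T := mul_lt_mul_of_pos_left htT hκ
    have h3 : 0 < cos (κ * t - arctan x) :=
      cos_pos_of_mem_Ioo ⟨by linarith, by linarith⟩
    linarith
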